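/- arXiv:2412.20556 — 3 statements merged into one kernel-verified Lean document; each statement's English description precedes it below -/
import Mathlib

section
/- Let Φ ⊆ ℝ^m be a nonempty closed convex set, ρ > 0, L ≥ 0, ε ≥ 0, K ≥ 1 an integer. Let V : ℝ^m → ℝ be continuous, ρ-weakly convex on Φ, and bounded below on Φ. Suppose φ₀ ∈ Φ and that for k = 0, …, K−1 there are vectors ζ_k ∈ ℝ^m with ‖ζ_k‖ ≤ L such that for all φ ∈ Φ, V(φ) ≥ V(φ_k) − ε + ⟨ζ_k, φ − φ_k⟩ − (ρ/2)‖φ − φ_k‖², and define φ_{k+1} := proj_Φ(φ_k − η ζ_k) with step size η = 1/√K. Then there exists k ∈ {0, 1, …, K−1} such that ‖2ρ(φ_k − prox_{V/2ρ}(φ_k))‖² ≤ 2(V_{1/2ρ}(φ₀) − inf_{φ∈Φ} V(φ) + ρL²)/√K + 4ρε, where V_{1/2ρ}(φ) := min_{φ'∈Φ}{V(φ') + ρ‖φ − φ'‖²} and prox_{V/2ρ}(φ) is its unique minimizer. -/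
open scoped RealInnerProductSpace

/-!
Since `V` is `ρ`-weakly convex, `y ↦ V y + ρ ‖x - y‖²` is `ρ`-strongly convex and grows
quadratically away from its minimizer, the proximal point `p` of `x`. This growth, evaluated at `x`,
shows that an inexact subgradient `ζ` at `x` satisfies `ρ ‖x - p‖² - ε ≤ ⟪ζ, x - p⟫`, so that a
projected step along `-η ζ` moves towards `p` and lowers the Moreau envelope, up to errors of order
`η²` and `η ε`. The decreases telescope along the iterates, the envelope stays above `inf V`, and
the smallest of the `‖2ρ (x - p)‖²` is at most their weighted average.
-/

variable {E : Type*} [NormedAddCommGroup E]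

section StrongConvexity

variable [NormedSpace ℝ E] {s : Set E}

/-- Weak convexity is strong convexity with a negative modulus. -/
theorem strongConvexOn_neg_modulus_iff {ρ : ℝ} {f : E → ℝ} :
    StrongConvexOn s (-ρ) f ↔ Convex ℝ s ∧ ∀ x ∈ s, ∀ y ∈ s, ∀ τ ∈ Set.Icc (0 : ℝ) 1,
      f (τ • x + (1 - τ) • y) ≤
        τ * f x + (1 - τ) * f y + ρ * τ * (1 - τ) / 2 * ‖x - y‖ ^ 2 := by
  refine and_congr_right fun _ ↦ ⟨fun hf x hx y hy τ hτ ↦ ?_, fun hf x hx y hy a b ha hb hab ↦ ?_⟩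
  · refine (hf hx hy hτ.1 (sub_nonneg.2 hτ.2) (add_sub_cancel τ 1)).trans_eq ?_
    simp only [smul_eq_mul]
    ring
  · obtain rfl : b = 1 - a := eq_sub_of_add_eq' hab
    refine (hf x hx y hy a ⟨ha, sub_nonneg.1 hb⟩).trans_eq ?_
    simp only [smul_eq_mul]
    ring

theorem add_mul_sq_norm_sub_le_of_isMinOn {f : E → ℝ} {μ : ℝ} {x y : E}
    (hf : StrongConvexOn s μ f) (hx : x ∈ s) (hmin : IsMinOn f s x) (hy : y ∈ s) :
    f x + μ / 2 * ‖y - x‖ ^ 2 ≤ f y := by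
  have growth_along_segment : ∀ t ∈ Set.Ioo (0 : ℝ) 1,
      f x + (1 - t) * (μ / 2 * ‖y - x‖ ^ 2) ≤ f y := by
    rintro t ⟨ht₀, ht₁⟩
    have hle : f x ≤ f (t • y + (1 - t) • x) :=
      hmin (hf.1 hy hx ht₀.le (by linarith) (by ring))
    have hconv := hf.2 hy hx ht₀.le (by linarith) (add_sub_cancel t 1)
    simp only [smul_eq_mul] at hconv
    refine le_of_mul_le_mul_left ?_ ht₀
    linarith
  have hlim : Filter.Tendsto (fun t : ℝ ↦ f x + (1 - t) * (μ / 2 * ‖y - x‖ ^ 2))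
      (nhdsWithin 0 (Set.Ioi 0)) (nhds (f x + (1 - 0) * (μ / 2 * ‖y - x‖ ^ 2))) :=
    (Continuous.tendsto (by fun_prop) 0).mono_left nhdsWithin_le_nhds
  rw [sub_zero, one_mul] at hlim
  exact le_of_tendsto hlim
    (Filter.eventually_of_mem (Ioo_mem_nhdsGT one_pos) growth_along_segment)

end StrongConvexity

section EuclideanProjection

variable [InnerProductSpace ℝ E] {s : Set E}

theorem strongConvexOn_mul_sq_norm_sub (hs : Convex ℝ s) (c : ℝ) (x : E) :
    StrongConvexOn s (2 * c) fun y ↦ c * ‖x - y‖ ^ 2 := by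
  rw [strongConvexOn_iff_convex]
  have affine : (fun y ↦ c * ‖x - y‖ ^ 2 - 2 * c / 2 * ‖y‖ ^ 2) =
      fun y ↦ (-(2 * c) • innerₗ E x) y + c * ‖x‖ ^ 2 := by
    funext y
    rw [norm_sub_sq_real, LinearMap.smul_apply, innerₗ_apply_apply, smul_eq_mul]
    ring
  rw [affine]
  exact (LinearMap.convexOn _ hs).add_const _

theorem strongConvexOn_add_mul_sq_norm_sub {μ : ℝ} {f : E → ℝ} (hf : StrongConvexOn s μ f)
    (c : ℝ) (x : E) : StrongConvexOn s (μ + 2 * c) fun y ↦ f y + c * ‖x - y‖ ^ 2 := by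
  have hsum := UniformConvexOn.add hf (strongConvexOn_mul_sq_norm_sub hf.1 c x)
  exact hsum.mono fun r ↦ by simp only [Pi.add_apply]; linarith

theorem sq_norm_sub_add_sq_norm_sub_le_of_isMinOn {q x z : E} (hs : Convex ℝ s) (hq : q ∈ s)
    (hmin : IsMinOn (fun y ↦ ‖y - z‖) s q) (hx : x ∈ s) :
    ‖z - q‖ ^ 2 + ‖x - q‖ ^ 2 ≤ ‖z - x‖ ^ 2 := by
  have hmin_sq : IsMinOn (fun y ↦ 1 * ‖z - y‖ ^ 2) s q := fun y hy ↦ by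
    change 1 * ‖z - q‖ ^ 2 ≤ 1 * ‖z - y‖ ^ 2
    rw [one_mul, one_mul, norm_sub_rev z, norm_sub_rev z]
    exact pow_le_pow_left₀ (norm_nonneg _) (hmin hy) 2
  have growth := add_mul_sq_norm_sub_le_of_isMinOn (strongConvexOn_mul_sq_norm_sub hs 1 z) hq
    hmin_sq hx
  linarith

theorem sq_norm_sub_le_of_isMinOn_gradient_step {x ζ q p : E} {η : ℝ} (hs : Convex ℝ s)
    (hq : q ∈ s) (hmin : IsMinOn (fun y ↦ ‖y - (x - η • ζ)‖) s q) (hp : p ∈ s) :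
    ‖q - p‖ ^ 2 ≤ ‖x - p‖ ^ 2 - 2 * η * ⟪ζ, x - p⟫ + η ^ 2 * ‖ζ‖ ^ 2 := by
  have expand : ‖x - η • ζ - p‖ ^ 2 =
      ‖x - p‖ ^ 2 - 2 * η * ⟪ζ, x - p⟫ + η ^ 2 * ‖ζ‖ ^ 2 := by
    rw [sub_right_comm, norm_sub_sq_real, real_inner_smul_right, real_inner_comm, norm_smul,
      mul_pow, Real.norm_eq_abs, sq_abs]
    ring
  calc ‖q - p‖ ^ 2 = ‖p - q‖ ^ 2 := by rw [norm_sub_rev]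
    _ ≤ ‖x - η • ζ - p‖ ^ 2 := by
      linarith [sq_norm_sub_add_sq_norm_sub_le_of_isMinOn hs hq hmin hp,
        sq_nonneg ‖x - η • ζ - q‖]
    _ = _ := expand

end EuclideanProjection

section MoreauEnvelope

/-- The Moreau envelope `V_{1/2ρ}` of `V` over `Φ`, with the penalty `(1/2λ) ‖x - y‖²` written as
`ρ ‖x - y‖²` for `λ = 1/2ρ`. It is the junk value `0` where the infimum does not exist. -/
noncomputable def moreauEnvelope (Φ : Set E) (V : E → ℝ) (ρ : ℝ) (x : E) : ℝ :=
  ⨅ y : Φ, (V y + ρ * ‖x - y‖ ^ 2)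

/-- `p` is a proximal point of `x`, that is, a value of `prox_{V/2ρ}` over `Φ` at `x`. A relation is
used because existence and uniqueness depend on `V` and `Φ`. -/
def IsProxPoint (Φ : Set E) (V : E → ℝ) (ρ : ℝ) (x p : E) : Prop :=
  p ∈ Φ ∧ IsMinOn (fun y ↦ V y + ρ * ‖x - y‖ ^ 2) Φ p

variable {Φ : Set E} {V : E → ℝ} {ρ : ℝ} {x y p : E}

theorem moreauEnvelope_le (hV : BddBelow (V '' Φ)) (hρ : 0 ≤ ρ) (hy : y ∈ Φ) :
    moreauEnvelope Φ V ρ x ≤ V y + ρ * ‖x - y‖ ^ 2 := by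
  obtain ⟨b, hb⟩ := hV
  refine ciInf_le ⟨b, ?_⟩ (⟨y, hy⟩ : Φ)
  rintro _ ⟨z, rfl⟩
  exact le_add_of_le_of_nonneg (hb ⟨z, z.2, rfl⟩) (by positivity)

theorem sInf_image_le_moreauEnvelope (hΦ : Φ.Nonempty) (hV : BddBelow (V '' Φ)) (hρ : 0 ≤ ρ) :
    sInf (V '' Φ) ≤ moreauEnvelope Φ V ρ x := by
  have := hΦ.to_subtype
  exact le_ciInf fun z ↦
    le_add_of_le_of_nonneg (csInf_le hV ⟨z, z.2, rfl⟩) (by positivity)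

theorem IsProxPoint.moreauEnvelope_eq (hp : IsProxPoint Φ V ρ x p) :
    moreauEnvelope Φ V ρ x = V p + ρ * ‖x - p‖ ^ 2 :=
  hp.2.iInf_eq hp.1

theorem IsProxPoint.add_mul_sq_norm_sub_le [InnerProductSpace ℝ E] {μ : ℝ}
    (hp : IsProxPoint Φ V ρ x p) (hV : StrongConvexOn Φ μ V) (hx : x ∈ Φ) :
    V p + (2 * ρ + μ / 2) * ‖x - p‖ ^ 2 ≤ V x := by
  have growth := add_mul_sq_norm_sub_le_of_isMinOn (strongConvexOn_add_mul_sq_norm_sub hV ρ x)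
    hp.1 hp.2 hx
  rw [sub_self, norm_zero] at growth
  linarith

end MoreauEnvelope

section InexactSubgradient

variable [InnerProductSpace ℝ E]

/-- `ζ` is an `ε`-inexact subgradient at `x` of the `ρ`-weakly convex function `V` on `Φ`: the
subgradient inequality holds up to the additive error `ε` and the quadratic defect of weak
convexity. -/
def IsInexactSubgradient (Φ : Set E) (V : E → ℝ) (ρ ε : ℝ) (x ζ : E) : Prop :=
  ∀ y ∈ Φ, V x - ε + ⟪ζ, y - x⟫ - ρ / 2 * ‖y - x‖ ^ 2 ≤ V y

/-- The first `K` steps of the projected method `φ (k + 1) = proj_Φ (φ k - η k • ζ k)` along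
`ε`-inexact subgradients `ζ k`. The projection is described as a nearest point, which needs no
completeness of the space. -/
structure IsInexactSubgradientRun (Φ : Set E) (V : E → ℝ) (ρ ε : ℝ) (η : ℕ → ℝ) (K : ℕ)
    (φ ζ : ℕ → E) : Prop where
  zero_mem : φ 0 ∈ Φ
  isInexactSubgradient : ∀ k < K, IsInexactSubgradient Φ V ρ ε (φ k) (ζ k)
  isProj_succ : ∀ k < K, φ (k + 1) ∈ Φ ∧ IsMinOn (fun y ↦ ‖y - (φ k - η k • ζ k)‖) Φ (φ (k + 1))

variable {Φ : Set E} {V : E → ℝ} {ρ ε : ℝ}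

theorem IsInexactSubgradient.sub_le_inner {x ζ p : E} (hζ : IsInexactSubgradient Φ V ρ ε x ζ)
    (hV : StrongConvexOn Φ (-ρ) V) (hx : x ∈ Φ) (hp : IsProxPoint Φ V ρ x p) :
    ρ * ‖x - p‖ ^ 2 - ε ≤ ⟪ζ, x - p⟫ := by
  have growth := hp.add_mul_sq_norm_sub_le hV hx
  have subgrad := hζ p hp.1
  rw [← neg_sub x p, inner_neg_right, norm_neg] at subgrad
  linarith

theorem IsInexactSubgradient.moreauEnvelope_descent {η : ℝ} {x ζ p q : E}
    (hζ : IsInexactSubgradient Φ V ρ ε x ζ) (hV : StrongConvexOn Φ (-ρ) V)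
    (hbdd : BddBelow (V '' Φ)) (hρ : 0 ≤ ρ) (hη : 0 ≤ η) (hx : x ∈ Φ)
    (hp : IsProxPoint Φ V ρ x p) (hq : q ∈ Φ)
    (hproj : IsMinOn (fun y ↦ ‖y - (x - η • ζ)‖) Φ q) :
    η * ‖(2 * ρ) • (x - p)‖ ^ 2 ≤
      2 * (moreauEnvelope Φ V ρ x - moreauEnvelope Φ V ρ q) + 2 * ρ * (η ^ 2 * ‖ζ‖ ^ 2)
        + 4 * ρ * ε * η := by
  have envelope_le : moreauEnvelope Φ V ρ q ≤
      moreauEnvelope Φ V ρ x - 2 * ρ * η * (ρ * ‖x - p‖ ^ 2 - ε) + ρ * (η ^ 2 * ‖ζ‖ ^ 2) :=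
    calc moreauEnvelope Φ V ρ q
        ≤ V p + ρ * ‖q - p‖ ^ 2 := moreauEnvelope_le hbdd hρ hp.1
      _ ≤ V p + ρ * (‖x - p‖ ^ 2 - 2 * η * ⟪ζ, x - p⟫ + η ^ 2 * ‖ζ‖ ^ 2) := by
        gcongr
        exact sq_norm_sub_le_of_isMinOn_gradient_step hV.1 hq hproj hp.1
      _ ≤ V p + ρ * (‖x - p‖ ^ 2 - 2 * η * (ρ * ‖x - p‖ ^ 2 - ε) + η ^ 2 * ‖ζ‖ ^ 2) := by
        gcongr
        exact hζ.sub_le_inner hV hx hp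
      _ = _ := by rw [hp.moreauEnvelope_eq]; ring
  rw [norm_smul, mul_pow, Real.norm_eq_abs, sq_abs]
  linarith

namespace IsInexactSubgradientRun

variable {η : ℕ → ℝ} {K : ℕ} {φ ζ p : ℕ → E}

theorem mem (h : IsInexactSubgradientRun Φ V ρ ε η K φ ζ) {k : ℕ} (hk : k ≤ K) : φ k ∈ Φ := by
  cases k with
  | zero => exact h.zero_mem
  | succ j => exact (h.isProj_succ j hk).1

theorem sum_mul_sq_norm_le (h : IsInexactSubgradientRun Φ V ρ ε η K φ ζ)
    (hV : StrongConvexOn Φ (-ρ) V) (hbdd : BddBelow (V '' Φ)) (hρ : 0 ≤ ρ)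
    (hη : ∀ k < K, 0 ≤ η k) (hp : ∀ k < K, IsProxPoint Φ V ρ (φ k) (p k)) :
    ∑ k ∈ Finset.range K, η k * ‖(2 * ρ) • (φ k - p k)‖ ^ 2 ≤
      2 * (moreauEnvelope Φ V ρ (φ 0) - sInf (V '' Φ))
        + 2 * ρ * ∑ k ∈ Finset.range K, η k ^ 2 * ‖ζ k‖ ^ 2
        + 4 * ρ * ε * ∑ k ∈ Finset.range K, η k := by
  have descent : ∀ k ∈ Finset.range K, η k * ‖(2 * ρ) • (φ k - p k)‖ ^ 2 ≤
      2 * (moreauEnvelope Φ V ρ (φ k) - moreauEnvelope Φ V ρ (φ (k + 1)))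
        + 2 * ρ * (η k ^ 2 * ‖ζ k‖ ^ 2) + 4 * ρ * ε * η k := fun k hk ↦ by
    have hk := Finset.mem_range.1 hk
    exact (h.isInexactSubgradient k hk).moreauEnvelope_descent hV hbdd hρ (hη k hk) (h.mem hk.le)
      (hp k hk) (h.isProj_succ k hk).1 (h.isProj_succ k hk).2
  refine (Finset.sum_le_sum descent).trans ?_
  rw [Finset.sum_add_distrib, Finset.sum_add_distrib, ← Finset.mul_sum, ← Finset.mul_sum,
    ← Finset.mul_sum, Finset.sum_range_sub']
  gcongr
  exact sInf_image_le_moreauEnvelope ⟨_, h.zero_mem⟩ hbdd hρ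

theorem exists_sq_norm_le {L : ℝ} (h : IsInexactSubgradientRun Φ V ρ ε η K φ ζ)
    (hV : StrongConvexOn Φ (-ρ) V) (hbdd : BddBelow (V '' Φ)) (hρ : 0 ≤ ρ) (hK : 0 < K)
    (hη : ∀ k < K, 0 < η k) (hζ : ∀ k < K, ‖ζ k‖ ≤ L)
    (hp : ∀ k < K, IsProxPoint Φ V ρ (φ k) (p k)) :
    ∃ k < K, ‖(2 * ρ) • (φ k - p k)‖ ^ 2 ≤
      2 * (moreauEnvelope Φ V ρ (φ 0) - sInf (V '' Φ)
        + ρ * L ^ 2 * ∑ k ∈ Finset.range K, η k ^ 2) / ∑ k ∈ Finset.range K, η k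
        + 4 * ρ * ε := by
  have range_nonempty : (Finset.range K).Nonempty := Finset.nonempty_range_iff.2 hK.ne'
  have sum_pos : 0 < ∑ k ∈ Finset.range K, η k :=
    Finset.sum_pos (fun k hk ↦ hη k (Finset.mem_range.1 hk)) range_nonempty
  have sum_sq_le : ∑ k ∈ Finset.range K, η k ^ 2 * ‖ζ k‖ ^ 2 ≤
      L ^ 2 * ∑ k ∈ Finset.range K, η k ^ 2 := by
    rw [Finset.mul_sum]
    refine Finset.sum_le_sum fun k hk ↦ ?_
    rw [mul_comm]
    gcongr
    exact hζ k (Finset.mem_range.1 hk)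
  set B := 2 * (moreauEnvelope Φ V ρ (φ 0) - sInf (V '' Φ)
    + ρ * L ^ 2 * ∑ k ∈ Finset.range K, η k ^ 2) / ∑ k ∈ Finset.range K, η k + 4 * ρ * ε with hB
  have weighted_average_le : ∑ k ∈ Finset.range K, η k * ‖(2 * ρ) • (φ k - p k)‖ ^ 2 ≤
      ∑ k ∈ Finset.range K, η k * B := by
    rw [← Finset.sum_mul, hB, mul_add, mul_div_cancel₀ _ sum_pos.ne']
    linarith [h.sum_mul_sq_norm_le hV hbdd hρ (fun k hk ↦ (hη k hk).le) hp,
      mul_le_mul_of_nonneg_left sum_sq_le hρ]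
  obtain ⟨k, hk, hle⟩ := Finset.exists_le_of_sum_le range_nonempty weighted_average_le
  have hk := Finset.mem_range.1 hk
  exact ⟨k, hk, le_of_mul_le_mul_left hle (hη k hk)⟩

end IsInexactSubgradientRun

theorem subgradient_max_convergence_general {L : ℝ} {K : ℕ} {φ ζ p : ℕ → E}
    (h : IsInexactSubgradientRun Φ V ρ ε (fun _ ↦ 1 / Real.sqrt K) K φ ζ)
    (hV : StrongConvexOn Φ (-ρ) V) (hbdd : BddBelow (V '' Φ)) (hρ : 0 ≤ ρ) (hK : 0 < K)
    (hζ : ∀ k < K, ‖ζ k‖ ≤ L) (hp : ∀ k < K, IsProxPoint Φ V ρ (φ k) (p k)) :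
    ∃ k < K, ‖(2 * ρ) • (φ k - p k)‖ ^ 2 ≤
      2 * (moreauEnvelope Φ V ρ (φ 0) - sInf (V '' Φ) + ρ * L ^ 2) / Real.sqrt K
        + 4 * ρ * ε := by
  have cast_pos : (0 : ℝ) < K := Nat.cast_pos.2 hK
  have sum_step : ∑ _k ∈ Finset.range K, 1 / Real.sqrt K = Real.sqrt K := by
    rw [Finset.sum_const, Finset.card_range, nsmul_eq_mul, mul_one_div, Real.div_sqrt]
  have sum_sq_step : ∑ _k ∈ Finset.range K, (1 / Real.sqrt K) ^ 2 = 1 := by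
    rw [Finset.sum_const, Finset.card_range, nsmul_eq_mul, div_pow, Real.sq_sqrt cast_pos.le,
      one_pow, mul_one_div_cancel cast_pos.ne']
  simpa only [sum_step, sum_sq_step, mul_one] using
    h.exists_sq_norm_le hV hbdd hρ hK (fun _ _ ↦ one_div_pos.2 (Real.sqrt_pos.2 cast_pos)) hζ hp

end InexactSubgradient

/-- convergence theorem for the inexact subgradient-max algorithm. With step
size η = 1/√K, some iterate φ_k has a Moreau-envelope gradient 2ρ(φ_k − prox_{V/2ρ}(φ_k))
of squared norm at most 2(V_{1/2ρ}(φ₀) − inf_Φ V + ρL²)/√K + 4ρε. -/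
theorem subgradient_max_convergence {m : ℕ} (Φ : Set (EuclideanSpace ℝ (Fin m)))
    (hne : Φ.Nonempty) (hcl : IsClosed Φ) (hΦ : Convex ℝ Φ)
    (ρ L ε : ℝ) (hρ : 0 < ρ) (hL : 0 ≤ L) (hε : 0 ≤ ε)
    (K : ℕ) (hK : 1 ≤ K)
    (V : EuclideanSpace ℝ (Fin m) → ℝ) (hcont : Continuous V)
    (hwc : ∀ x ∈ Φ, ∀ y ∈ Φ, ∀ τ ∈ Set.Icc (0:ℝ) 1,
      V (τ • x + (1 - τ) • y) ≤
        τ * V x + (1 - τ) * V y + ρ * τ * (1 - τ) / 2 * ‖x - y‖ ^ 2)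
    (hbdd : BddBelow (V '' Φ))
    (φ : ℕ → EuclideanSpace ℝ (Fin m)) (ζ : ℕ → EuclideanSpace ℝ (Fin m))
    (hφ0 : φ 0 ∈ Φ)
    (hζnorm : ∀ k < K, ‖ζ k‖ ≤ L)
    (hsub : ∀ k < K, ∀ ψ ∈ Φ,
      V ψ ≥ V (φ k) - ε + ⟪ζ k, ψ - φ k⟫ - ρ / 2 * ‖ψ - φ k‖ ^ 2)
    (hproj : ∀ k < K, φ (k + 1) ∈ Φ ∧ ∀ y ∈ Φ,
      ‖φ (k + 1) - (φ k - (1 / Real.sqrt K) • ζ k)‖ ≤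
        ‖y - (φ k - (1 / Real.sqrt K) • ζ k)‖)
    (prox : EuclideanSpace ℝ (Fin m) → EuclideanSpace ℝ (Fin m))
    (hproxmem : ∀ ψ, prox ψ ∈ Φ)
    (hproxmin : ∀ ψ, ∀ y ∈ Φ,
      V (prox ψ) + ρ * ‖ψ - prox ψ‖ ^ 2 ≤ V y + ρ * ‖ψ - y‖ ^ 2) :
    ∃ k < K, ‖(2 * ρ) • (φ k - prox (φ k))‖ ^ 2 ≤
      2 * ((V (prox (φ 0)) + ρ * ‖φ 0 - prox (φ 0)‖ ^ 2) - sInf (V '' Φ) + ρ * L ^ 2) /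
        Real.sqrt K + 4 * ρ * ε := by
  rw [← IsProxPoint.moreauEnvelope_eq ⟨hproxmem (φ 0), hproxmin (φ 0)⟩]
  exact subgradient_max_convergence_general ⟨hφ0, hsub, hproj⟩
    (strongConvexOn_neg_modulus_iff.2 ⟨hΦ, hwc⟩) hbdd hρ.le hK hζnorm
    fun k _ ↦ ⟨hproxmem (φ k), hproxmin (φ k)⟩
end

section
/- Let P be a Borel probability measure on ℝ^d with finite second moment, and let T₁, T₂ : ℝ^d → ℝ^d be Borel measurable maps with ∫‖T_i(x)‖² dP(x) < ∞ for i = 1, 2. Set Q_i := (T_i)_#P and assume each T_i is an optimal transport map, i.e., ∫‖T_i(x) − x‖² dP(x) = W₂²(Q_i, P). Then for every t ∈ [0,1], the generalized geodesic μ_t := ((1−t)T₁ + tT₂)_#P satisfies (1/2)W₂²(μ_t, P) ≤ (1−t)·(1/2)W₂²(Q₁, P) + t·(1/2)W₂²(Q₂, P) − (t(1−t)/2)∫‖T₁(x) − T₂(x)‖² dP(x). In particular, Q ↦ (1/2)W₂²(Q, P) is 1-strongly convex along generalized geodesics centered at P. -/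
/-! The pair `((1 - t) T₁ + t T₂, id)` pushes `P` to an admissible, in general not optimal, coupling
of `μ_t` and `P`, so its cost bounds `W₂²(μ_t, P)` from above. The exact quadratic identity
`‖(1 - t) u + t v‖² = (1 - t) ‖u‖² + t ‖v‖² - t (1 - t) ‖u - v‖²` at `u = T₁ x - x`, `v = T₂ x - x`
expresses that cost through those of `T₁` and `T₂`, which are optimal. -/

open MeasureTheory

/-- The squared Wasserstein-2 distance between two Borel probability measures on ℝ^d,
defined as the infimum of ∫‖x−y‖² dπ over couplings π. -/
noncomputable def W2sq {d : ℕ} (μ ν : Measure (EuclideanSpace ℝ (Fin d))) : ℝ :=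
  sInf { c : ℝ |
    ∃ π : Measure (EuclideanSpace ℝ (Fin d) × EuclideanSpace ℝ (Fin d)),
      IsProbabilityMeasure π ∧ π.map Prod.fst = μ ∧ π.map Prod.snd = ν ∧
      c = ∫ p, ‖p.1 - p.2‖ ^ 2 ∂π }

section InnerProductSpace

variable {E : Type*} [NormedAddCommGroup E] [InnerProductSpace ℝ E]

theorem norm_smul_add_smul_sq_of_add_eq_one {a b : ℝ} (hab : a + b = 1) (x y : E) :
    ‖a • x + b • y‖ ^ 2 = a * ‖x‖ ^ 2 + b * ‖y‖ ^ 2 - a * b * ‖x - y‖ ^ 2 := by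
  obtain rfl := eq_sub_of_add_eq hab
  rw [norm_add_sq_real, norm_sub_sq_real, norm_smul, norm_smul, mul_pow, mul_pow,
    Real.norm_eq_abs, Real.norm_eq_abs, sq_abs, sq_abs, real_inner_smul_left,
    real_inner_smul_right]
  ring

theorem integral_norm_smul_add_smul_sq_of_add_eq_one {Ω : Type*} [MeasurableSpace Ω]
    {μ : Measure Ω} {f g : Ω → E} (hf : MemLp f 2 μ) (hg : MemLp g 2 μ) {a b : ℝ}
    (hab : a + b = 1) :
    ∫ ω, ‖a • f ω + b • g ω‖ ^ 2 ∂μ =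
      a * ∫ ω, ‖f ω‖ ^ 2 ∂μ + b * ∫ ω, ‖g ω‖ ^ 2 ∂μ - a * b * ∫ ω, ‖f ω - g ω‖ ^ 2 ∂μ := by
  have integrable_sq {h : Ω → E} (hh : MemLp h 2 μ) : Integrable (fun ω ↦ ‖h ω‖ ^ 2) μ :=
    (memLp_two_iff_integrable_sq_norm hh.1).1 hh
  have hf_sq : Integrable (fun ω ↦ a * ‖f ω‖ ^ 2) μ := (integrable_sq hf).const_mul a
  have hg_sq : Integrable (fun ω ↦ b * ‖g ω‖ ^ 2) μ := (integrable_sq hg).const_mul b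
  have hsum : Integrable (fun ω ↦ a * ‖f ω‖ ^ 2 + b * ‖g ω‖ ^ 2) μ := hf_sq.add hg_sq
  have hfg_sq : Integrable (fun ω ↦ a * b * ‖f ω - g ω‖ ^ 2) μ :=
    (integrable_sq (hf.sub hg)).const_mul (a * b)
  simp_rw [norm_smul_add_smul_sq_of_add_eq_one hab]
  rw [integral_sub hsum hfg_sq, integral_add hf_sq hg_sq]
  simp_rw [integral_const_mul]

end InnerProductSpace

section W2sq

variable {d : ℕ}

theorem W2sq_map_fst_map_snd_le
    (π : Measure (EuclideanSpace ℝ (Fin d) × EuclideanSpace ℝ (Fin d))) [IsProbabilityMeasure π] :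
    W2sq (π.map Prod.fst) (π.map Prod.snd) ≤ ∫ p, ‖p.1 - p.2‖ ^ 2 ∂π := by
  refine csInf_le ⟨0, ?_⟩ ⟨π, inferInstance, rfl, rfl, rfl⟩
  rintro _ ⟨_, -, -, -, rfl⟩
  exact integral_nonneg fun _ ↦ sq_nonneg _

variable {Ω : Type*} [MeasurableSpace Ω] {μ : Measure Ω} [IsProbabilityMeasure μ]
  {X Y Y₁ Y₂ : Ω → EuclideanSpace ℝ (Fin d)}

theorem W2sq_map_map_le (hY : AEMeasurable Y μ) (hX : AEMeasurable X μ) :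
    W2sq (μ.map Y) (μ.map X) ≤ ∫ ω, ‖Y ω - X ω‖ ^ 2 ∂μ := by
  have hYX : AEMeasurable (fun ω ↦ (Y ω, X ω)) μ := hY.prodMk hX
  have := Measure.isProbabilityMeasure_map hYX
  calc W2sq (μ.map Y) (μ.map X)
      = W2sq (μ.map fun ω ↦ (Y ω, X ω)).fst (μ.map fun ω ↦ (Y ω, X ω)).snd := by
        rw [Measure.fst_map_prodMk₀ hX, Measure.snd_map_prodMk₀ hY]
    _ ≤ ∫ p, ‖p.1 - p.2‖ ^ 2 ∂(μ.map fun ω ↦ (Y ω, X ω)) := W2sq_map_fst_map_snd_le _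
    _ = ∫ ω, ‖Y ω - X ω‖ ^ 2 ∂μ := integral_map hYX (by fun_prop)

/-- The laws of `Y₁`, `Y₂` are joined through the law of `X` by a three-marginal plan, the law of
`(X, Y₁, Y₂)`, which need not be induced by maps. -/
theorem half_W2sq_strongly_convex_agg_general (hX : AEMeasurable X μ)
    (hY₁ : MemLp (Y₁ - X) 2 μ) (hY₂ : MemLp (Y₂ - X) 2 μ)
    (hopt₁ : ∫ ω, ‖Y₁ ω - X ω‖ ^ 2 ∂μ = W2sq (μ.map Y₁) (μ.map X))
    (hopt₂ : ∫ ω, ‖Y₂ ω - X ω‖ ^ 2 ∂μ = W2sq (μ.map Y₂) (μ.map X)) (t : ℝ) :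
    1 / 2 * W2sq (μ.map fun ω ↦ (1 - t) • Y₁ ω + t • Y₂ ω) (μ.map X) ≤
      (1 - t) * (1 / 2 * W2sq (μ.map Y₁) (μ.map X)) + t * (1 / 2 * W2sq (μ.map Y₂) (μ.map X)) -
        t * (1 - t) / 2 * ∫ ω, ‖Y₁ ω - Y₂ ω‖ ^ 2 ∂μ := by
  have hY₁_meas : AEMeasurable Y₁ μ := by simpa using hY₁.aemeasurable.add hX
  have hY₂_meas : AEMeasurable Y₂ μ := by simpa using hY₂.aemeasurable.add hX
  have displacement (ω : Ω) : (1 - t) • Y₁ ω + t • Y₂ ω - X ω =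
      (1 - t) • (Y₁ - X) ω + t • (Y₂ - X) ω := by
    simp only [Pi.sub_apply]
    module
  have hW : W2sq (μ.map fun ω ↦ (1 - t) • Y₁ ω + t • Y₂ ω) (μ.map X) ≤
      (1 - t) * W2sq (μ.map Y₁) (μ.map X) + t * W2sq (μ.map Y₂) (μ.map X) -
        (1 - t) * t * ∫ ω, ‖Y₁ ω - Y₂ ω‖ ^ 2 ∂μ := calc
    _ ≤ ∫ ω, ‖(1 - t) • Y₁ ω + t • Y₂ ω - X ω‖ ^ 2 ∂μ := W2sq_map_map_le (by fun_prop) hX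
    _ = ∫ ω, ‖(1 - t) • (Y₁ - X) ω + t • (Y₂ - X) ω‖ ^ 2 ∂μ := by simp_rw [displacement]
    _ = _ := by
      rw [integral_norm_smul_add_smul_sq_of_add_eq_one hY₁ hY₂ (sub_add_cancel 1 t)]
      simp only [Pi.sub_apply, sub_sub_sub_cancel_right, hopt₁, hopt₂]
  linarith

end W2sq

/-- strong convexity of Q ↦ (1/2)W₂²(Q, P) along generalized geodesics
centered at P: if T₁, T₂ are optimal transport maps from P to Q₁, Q₂, then along the
curve μ_t = ((1−t)T₁ + tT₂)_#P one has
(1/2)W₂²(μ_t,P) ≤ (1−t)(1/2)W₂²(Q₁,P) + t(1/2)W₂²(Q₂,P) − (t(1−t)/2)∫‖T₁−T₂‖²dP. -/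
theorem half_W2sq_strongly_convex_agg {d : ℕ} (P : Measure (EuclideanSpace ℝ (Fin d)))
    [IsProbabilityMeasure P] (hP2 : Integrable (fun x => ‖x‖ ^ 2) P)
    (T₁ T₂ : EuclideanSpace ℝ (Fin d) → EuclideanSpace ℝ (Fin d))
    (hT₁ : Measurable T₁) (hT₂ : Measurable T₂)
    (hT₁int : Integrable (fun x => ‖T₁ x‖ ^ 2) P)
    (hT₂int : Integrable (fun x => ‖T₂ x‖ ^ 2) P)
    (hopt₁ : ∫ x, ‖T₁ x - x‖ ^ 2 ∂P = W2sq (P.map T₁) P)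
    (hopt₂ : ∫ x, ‖T₂ x - x‖ ^ 2 ∂P = W2sq (P.map T₂) P) :
    ∀ t ∈ Set.Icc (0:ℝ) 1,
      1 / 2 * W2sq (P.map (fun x => (1 - t) • T₁ x + t • T₂ x)) P ≤
        (1 - t) * (1 / 2 * W2sq (P.map T₁) P) + t * (1 / 2 * W2sq (P.map T₂) P) -
          t * (1 - t) / 2 * ∫ x, ‖T₁ x - T₂ x‖ ^ 2 ∂P := by
  intro t _
  have hid : MemLp (fun x ↦ x) 2 P :=
    (memLp_two_iff_integrable_sq_norm aestronglyMeasurable_id).2 hP2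
  have hT₁L2 := (memLp_two_iff_integrable_sq_norm hT₁.aestronglyMeasurable).2 hT₁int
  have hT₂L2 := (memLp_two_iff_integrable_sq_norm hT₂.aestronglyMeasurable).2 hT₂int
  have hmap : P.map (fun x ↦ x) = P := Measure.map_id
  simpa only [hmap] using half_W2sq_strongly_convex_agg_general aemeasurable_id'
    (hT₁L2.sub hid) (hT₂L2.sub hid) (by rwa [hmap]) (by rwa [hmap]) t
end

section
/- Let Φ ⊆ ℝ^m be a nonempty closed convex set, let V : ℝ^m → ℝ be differentiable with L_V-Lipschitz gradient, let φ ∈ Φ, g ∈ ℝ^m, η > 0, and set φ⁺ := proj_Φ(φ − ηg). Then for every s > 0, V(φ⁺) ≤ V(φ) − (1/(2η) − L_V/2 − s/2)·‖φ⁺ − φ‖² + (1/(2s))·‖g − ∇V(φ)‖². -/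
open scoped RealInnerProductSpace

/-!
Expand `V φ⁺` at `φ` to first order, with error at most `L_V / 2 * ‖φ⁺ - φ‖ ^ 2`, and split
`⟪∇V φ, φ⁺ - φ⟫ = ⟪g, φ⁺ - φ⟫ + ⟪∇V φ - g, φ⁺ - φ⟫`. Since `φ⁺` is at least as close to
`φ - η • g` as `φ` itself is, squaring the two distances gives
`⟪g, φ⁺ - φ⟫ ≤ -‖φ⁺ - φ‖ ^ 2 / (2 * η)`; Young's inequality bounds the gradient error term.
-/

section FirstOrderExpansion

variable {E F : Type*} [NormedAddCommGroup E] [NormedSpace ℝ E]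
  [NormedAddCommGroup F] [NormedSpace ℝ F]

theorem norm_image_one_sub_image_zero_le_of_norm_deriv_le_mul {r r' : ℝ → F} {C : ℝ}
    (hr : ∀ t ∈ Set.Icc (0 : ℝ) 1, HasDerivWithinAt r (r' t) (Set.Icc 0 1) t)
    (bound : ∀ t ∈ Set.Ico (0 : ℝ) 1, ‖r' t‖ ≤ C * t) : ‖r 1 - r 0‖ ≤ C / 2 := by
  have hB (t : ℝ) : HasDerivAt (fun t ↦ C / 2 * t ^ 2) (C * t) t :=
    ((hasDerivAt_pow 2 t).const_mul (C / 2)).congr_deriv (by ring)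
  have hr_right : ∀ t ∈ Set.Ico (0 : ℝ) 1,
      HasDerivWithinAt (fun t ↦ r t - r 0) (r' t) (Set.Ici t) t := fun t ht ↦
    ((hr t (Set.Ico_subset_Icc_self ht)).sub_const (r 0)).mono_of_mem_nhdsWithin
      (Icc_mem_nhdsGE_of_mem ht)
  simpa using image_norm_le_of_norm_deriv_right_le_deriv_boundary
    (fun t ht ↦ ((hr t ht).sub_const (r 0)).continuousWithinAt)
    hr_right (by simp) hB bound (Set.right_mem_Icc.2 zero_le_one)

theorem norm_image_sub_sub_le_of_norm_hasFDerivWithin_sub_le {f : E → F} {f' : E → E →L[ℝ] F}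
    {s : Set E} {x y : E} {L : ℝ} (hs : StarConvex ℝ x s)
    (hf : ∀ z ∈ s, HasFDerivWithinAt f (f' z) s z)
    (hL : ∀ z ∈ s, ‖f' z - f' x‖ ≤ L * ‖z - x‖) (hy : y ∈ s) :
    ‖f y - f x - f' x (y - x)‖ ≤ L / 2 * ‖y - x‖ ^ 2 := by
  set v := y - x
  let γ : ℝ → E := fun t ↦ x + t • v
  let r : ℝ → F := fun t ↦ f (γ t) - t • f' x v
  have hγ_mem : Set.MapsTo γ (Set.Icc 0 1) s := fun t ht ↦ hs.add_smul_sub_mem hy ht.1 ht.2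
  have hγ (t : ℝ) : HasDerivAt γ v t := by
    simpa only [id_eq, one_smul] using ((hasDerivAt_id t).smul_const v).const_add x
  have hr : ∀ t ∈ Set.Icc (0 : ℝ) 1,
      HasDerivWithinAt r ((f' (γ t) - f' x) v) (Set.Icc 0 1) t := fun t ht ↦ by
    have hfγ := (hf (γ t) (hγ_mem ht)).comp_hasDerivWithinAt t (hγ t).hasDerivWithinAt hγ_mem
    have hlinear := ((hasDerivAt_id t).smul_const (f' x v)).hasDerivWithinAt (s := Set.Icc 0 1)
    rw [one_smul] at hlinear
    exact hfγ.sub hlinear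
  have hr_le : ∀ t ∈ Set.Ico (0 : ℝ) 1, ‖(f' (γ t) - f' x) v‖ ≤ L * ‖v‖ ^ 2 * t := fun t ht ↦
    calc ‖(f' (γ t) - f' x) v‖ ≤ L * ‖γ t - x‖ * ‖v‖ :=
          (f' (γ t) - f' x).le_of_opNorm_le (hL _ (hγ_mem (Set.Ico_subset_Icc_self ht))) v
      _ = L * ‖v‖ ^ 2 * t := by
          rw [add_sub_cancel_left, norm_smul, Real.norm_of_nonneg ht.1]
          ring
  calc ‖f y - f x - f' x v‖ = ‖r 1 - r 0‖ := by simp [r, γ, v, sub_right_comm]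
    _ ≤ L * ‖v‖ ^ 2 / 2 := norm_image_one_sub_image_zero_le_of_norm_deriv_le_mul hr hr_le
    _ = L / 2 * ‖v‖ ^ 2 := by ring

end FirstOrderExpansion

section InnerProduct

variable {E : Type*} [SeminormedAddCommGroup E] [InnerProductSpace ℝ E]

theorem real_inner_le_neg_of_norm_add_smul_le {g d : E} {η : ℝ} (hη : 0 < η)
    (h : ‖d + η • g‖ ≤ ‖η • g‖) : ⟪g, d⟫ ≤ -(1 / (2 * η) * ‖d‖ ^ 2) := by
  have hsq : ‖d‖ ^ 2 + 2 * (η * ⟪g, d⟫) + ‖η • g‖ ^ 2 ≤ ‖η • g‖ ^ 2 := by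
    rw [← real_inner_comm, ← real_inner_smul_right, ← norm_add_sq_real]
    gcongr
  calc ⟪g, d⟫ = 1 / (2 * η) * (2 * (η * ⟪g, d⟫)) := by field_simp
    _ ≤ 1 / (2 * η) * -‖d‖ ^ 2 := by gcongr; linarith
    _ = -(1 / (2 * η) * ‖d‖ ^ 2) := mul_neg _ _

theorem young_inequality_real_inner (u v : E) {s : ℝ} (hs : 0 < s) :
    ⟪u, v⟫ ≤ 1 / (2 * s) * ‖u‖ ^ 2 + s / 2 * ‖v‖ ^ 2 := by
  have hyoung : 2 * ‖u‖ * ‖v‖ ≤ s⁻¹ * ‖u‖ ^ 2 + s⁻¹⁻¹ * ‖v‖ ^ 2 :=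
    two_mul_le_add_mul_sq (inv_pos.2 hs)
  calc ⟪u, v⟫ ≤ ‖u‖ * ‖v‖ := real_inner_le_norm u v
    _ ≤ (s⁻¹ * ‖u‖ ^ 2 + s⁻¹⁻¹ * ‖v‖ ^ 2) / 2 := by linarith
    _ = 1 / (2 * s) * ‖u‖ ^ 2 + s / 2 * ‖v‖ ^ 2 := by field_simp

end InnerProduct

section Descent

variable {E : Type*} [NormedAddCommGroup E] [InnerProductSpace ℝ E] [CompleteSpace E]
  {V : E → ℝ} {V' : E → E} {S : Set E} {L : ℝ}

theorem le_add_inner_gradient_add_of_norm_gradient_sub_le {x y : E} (hS : StarConvex ℝ x S)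
    (hV : ∀ z ∈ S, HasGradientWithinAt V (V' z) S z)
    (hL : ∀ z ∈ S, ‖V' z - V' x‖ ≤ L * ‖z - x‖) (hy : y ∈ S) :
    V y ≤ V x + ⟪V' x, y - x⟫ + L / 2 * ‖y - x‖ ^ 2 := by
  have hremainder := norm_image_sub_sub_le_of_norm_hasFDerivWithin_sub_le hS
    (fun z hz ↦ (hV z hz).hasFDerivWithinAt)
    (fun z hz ↦ by rw [← map_sub, LinearIsometryEquiv.norm_map]; exact hL z hz) hy
  rw [InnerProductSpace.toDual_apply_apply] at hremainder
  linarith [(Real.le_norm_self _).trans hremainder]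

theorem projected_gradient_descent_step_general {φ φp g : E} {η s : ℝ} (hS : StarConvex ℝ φ S)
    (hV : ∀ z ∈ S, HasGradientWithinAt V (V' z) S z)
    (hL : ∀ z ∈ S, ‖V' z - V' φ‖ ≤ L * ‖z - φ‖) (hφp : φp ∈ S) (hη : 0 < η)
    (hcloser : ‖φp - (φ - η • g)‖ ≤ ‖φ - (φ - η • g)‖) (hs : 0 < s) :
    V φp ≤ V φ - (1 / (2 * η) - L / 2 - s / 2) * ‖φp - φ‖ ^ 2 +
      1 / (2 * s) * ‖g - V' φ‖ ^ 2 := by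
  have hexpand := le_add_inner_gradient_add_of_norm_gradient_sub_le hS hV hL hφp
  have hdecrease : ⟪g, φp - φ⟫ ≤ -(1 / (2 * η) * ‖φp - φ‖ ^ 2) := by
    refine real_inner_le_neg_of_norm_add_smul_le hη ?_
    rwa [sub_sub_cancel, ← sub_add] at hcloser
  have herror := young_inequality_real_inner (V' φ - g) (φp - φ) hs
  rw [inner_sub_left, norm_sub_rev (V' φ)] at herror
  linarith

end Descent

/-- one-step descent inequality for an inexact projected gradient step on a
function with L_V-Lipschitz gradient: for every s > 0,
V(φ⁺) ≤ V(φ) − (1/(2η) − L_V/2 − s/2)‖φ⁺ − φ‖² + (1/(2s))‖g − ∇V(φ)‖². -/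
theorem projected_gradient_descent_step {m : ℕ} (Φ : Set (EuclideanSpace ℝ (Fin m)))
    (hne : Φ.Nonempty) (hcl : IsClosed Φ) (hΦ : Convex ℝ Φ)
    (V : EuclideanSpace ℝ (Fin m) → ℝ)
    (V' : EuclideanSpace ℝ (Fin m) → EuclideanSpace ℝ (Fin m))
    (hdiff : ∀ x, HasGradientAt V (V' x) x)
    (L_V : ℝ) (hLV : 0 ≤ L_V)
    (hLip : ∀ x y, ‖V' x - V' y‖ ≤ L_V * ‖x - y‖)
    (φ : EuclideanSpace ℝ (Fin m)) (hφ : φ ∈ Φ)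
    (g : EuclideanSpace ℝ (Fin m)) (η : ℝ) (hη : 0 < η)
    (φp : EuclideanSpace ℝ (Fin m)) (hφp : φp ∈ Φ)
    (hproj : ∀ y ∈ Φ, ‖φp - (φ - η • g)‖ ≤ ‖y - (φ - η • g)‖) :
    ∀ s : ℝ, 0 < s →
      V φp ≤ V φ - (1 / (2 * η) - L_V / 2 - s / 2) * ‖φp - φ‖ ^ 2 +
        1 / (2 * s) * ‖g - V' φ‖ ^ 2 := by
  intro s hs
  exact projected_gradient_descent_step_general (starConvex_univ φ)
    (fun z _ ↦ hasGradientWithinAt_univ.2 (hdiff z)) (fun z _ ↦ hLip z φ) (Set.mem_univ φp) hη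
    (hproj φ hφ) hs
end
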